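/- arXiv:1605.07330 — 11 statements merged into one kernel-verified Lean document; each statement's English description precedes it below -/
import Mathlib

section
/- The operation ⋆ on X is associative, and the tuple (1) is a two-sided identity for ⋆; hence (X,⋆) is a monoid. -/
/-- Finite continued fraction `[0; n₁, …, n_k] = 1/(n₁ + 1/(n₂ + ⋯ + 1/n_k))`,
with the empty tuple giving `0`. -/
def cf : List ℕ → ℚ
  | [] => 0
  | n :: t => 1 / (n + cf t)

/-- `theta (n₁, …, n_k) = [0; n₁, …, n_k, 1]`. -/
def theta (a : List ℕ) : ℚ := cf (a ++ [1])

/-- Membership in `X`: a nonempty tuple of positive integers. -/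
def IsX (a : List ℕ) : Prop := a ≠ [] ∧ ∀ n ∈ a, 0 < n

/-- The monoid operation `⋆` on `X` (concatenation of paths in the Farey tree),
with the zero-elimination rules `(…, m, 0, n, …) = (…, m + n, …)` and a trailing
zero dropped, built into the definition. -/
def star (x y : List ℕ) : List ℕ :=
  match y with
  | [] => x
  | m :: rest =>
    if x.length % 2 = 0 then
      if m = 1 then
        match rest with
        | [] => x
        | m2 :: rest2 => x.dropLast ++ (x.getLastD 0 + m2) :: rest2
      else x ++ (m - 1) :: rest
    else x.dropLast ++ (x.getLastD 0 + m - 1) :: rest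

/-- The involution `K`: `K(1) = (1)`, `K(1, n₂, …, n_k) = (n₂+1, n₃, …, n_k)`,
and `K(n₁, …, n_k) = (1, n₁−1, n₂, …, n_k)` for `n₁ ≥ 2`. -/
def K : List ℕ → List ℕ
  | [] => []
  | [1] => [1]
  | 1 :: n :: rest => (n + 1) :: rest
  | n :: rest => 1 :: (n - 1) :: rest

/-- The Farey map on tuples: `(n₁, …, n_k) ↦ (n₁ − 1, n₂, …, n_k)` if `n₁ ≥ 2`,
and `(1, n₂, …, n_k) ↦ (n₂, …, n_k)`. -/
def TF : List ℕ → List ℕ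
  | [] => []
  | 1 :: rest => rest
  | n :: rest => (n - 1) :: rest

/-- The flipped Farey map (parent map in the Farey tree):
`(n₁, …, n_k) ↦ (n₁, …, n_k − 1)`, a trailing zero being dropped. -/
def TpF (a : List ℕ) : List ℕ := (TF a.reverse).reverse

/-- Auxiliary: continuant computed from the front. -/
def contAux : List ℕ → ℕ
  | [] => 1
  | [n] => n
  | n :: m :: rest => n * contAux (m :: rest) + contAux rest

/-- The continuant `⟨n₁, …, n_k⟩`: `⟨⟩ = 1`, `⟨n₁⟩ = n₁`,
`⟨n₁, …, n_k⟩ = n_k ⟨n₁, …, n_{k−1}⟩ + ⟨n₁, …, n_{k−2}⟩`. -/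
def cont (a : List ℕ) : ℕ := contAux a.reverse

/-- Length of the Farey interval `I(a)`, the interval with endpoints
`[0; n₁, …, n_{k−1}]` and `[0; n₁, …, n_k]`. -/
def ilen (a : List ℕ) : ℚ := |cf a - cf a.dropLast|

/-- Auxiliary for `J`: process the middle entries `n₂, …, n_{k−1}`, keeping the
output built so far in reversed order; an entry `n ≥ 2` contributes the block
`1_{n−2}, 2`, while an entry `n = 1` contributes `1_{−1}, 2`, which is resolved
by the rule `(…, m, 1_{−1}, 2, …) = (…, m + 1, …)`. -/
def Jmid : List ℕ → List ℕ → List ℕ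
  | [], out => out
  | n :: rest, out =>
    if n = 1 then
      Jmid rest (match out with
        | [] => [1]
        | h :: t => (h + 1) :: t)
    else
      Jmid rest (2 :: (List.replicate (n - 2) 1 ++ out))

/-- Dyer's involution `J` (jimm) on tuples: `J(n₁) = 1_{n₁}` and, for `k ≥ 2`,
`J(n₁, …, n_k) = (1_{n₁−1}, 2, 1_{n₂−2}, 2, …, 1_{n_{k−1}−2}, 2, 1_{n_k−1})`,
with `1_0` deleted and `1_{−1}` resolved by `(…, m, 1_{−1}, n, …) = (…, m+n−1, …)`. -/
def J : List ℕ → List ℕ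
  | [] => []
  | [n] => List.replicate n 1
  | n :: rest =>
      (Jmid rest.dropLast (2 :: List.replicate (n - 1) 1)).reverse
        ++ List.replicate (rest.getLastD 1 - 1) 1

theorem st_odd (x r : List ℕ) (a m : ℕ) (h : x.length % 2 = 0) :
    star (x ++ [a]) ((m + 1) :: r) = x ++ (a + m) :: r := by
  have : ¬ (x.length + 1) % 2 = 0 := by omega
  simp [_root_.star, this, List.getLastD_eq_getLast?]

theorem st_even (x r : List ℕ) (a m : ℕ) (h : x.length % 2 = 1) :
    star (x ++ [a]) ((m + 2) :: r) = x ++ a :: (m + 1) :: r := by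
  have : (x.length + 1) % 2 = 0 := by omega
  simp [_root_.star, this]

theorem st_even_one (x : List ℕ) (a : ℕ) :
    star (x ++ [a]) [1] = x ++ [a] := by
  simp [_root_.star, List.getLastD_eq_getLast?]

theorem st_even_merge (x r : List ℕ) (a m : ℕ) (h : x.length % 2 = 1) :
    star (x ++ [a]) (1 :: m :: r) = x ++ (a + m) :: r := by
  have : (x.length + 1) % 2 = 0 := by omega
  simp [_root_.star, this, List.getLastD_eq_getLast?]

theorem isX_snoc {x : List ℕ} (h : IsX x) : ∃ x' a, x = x' ++ [a + 1] ∧ ∀ n ∈ x', 0 < n := by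
  obtain ⟨h1, h2⟩ := h
  rcases List.eq_nil_or_concat x with rfl | ⟨x', a, rfl⟩
  · exact absurd rfl h1
  · have : 0 < a := h2 a (by simp)
    obtain ⟨b, rfl⟩ := Nat.exists_eq_succ_of_ne_zero this.ne'
    exact ⟨x', b, by simp, fun n hn => h2 n (by simp [hn])⟩

theorem isX_cons {x : List ℕ} (h : IsX x) : ∃ a x', x = (a + 1) :: x' ∧ ∀ n ∈ x', 0 < n := by
  obtain ⟨h1, h2⟩ := h
  rcases x with _ | ⟨a, x'⟩
  · exact absurd rfl h1
  · have : 0 < a := h2 a (by simp)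
    obtain ⟨b, rfl⟩ := Nat.exists_eq_succ_of_ne_zero this.ne'
    exact ⟨b, x', rfl, fun n hn => h2 n (by simp [hn])⟩

theorem st_one_left {x : List ℕ} (h : IsX x) : star [1] x = x := by
  obtain ⟨a, r, rfl, -⟩ := isX_cons h
  simp [_root_.star]

theorem st_one_right {x : List ℕ} (h : IsX x) : star x [1] = x := by
  obtain ⟨x', a, rfl, -⟩ := isX_snoc h
  exact st_even_one _ _

theorem st_closed {x y : List ℕ} (hx : IsX x) (hy : IsX y) : IsX (star x y) := by
  obtain ⟨x, a, rfl, hx'⟩ := isX_snoc hx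
  obtain ⟨m, r, rfl, hr⟩ := isX_cons hy
  rcases Nat.mod_two_eq_zero_or_one x.length with h | h
  · rw [st_odd _ _ _ _ h]
    refine ⟨by simp, fun n hn => ?_⟩
    simp at hn
    rcases hn with hn | rfl | hn
    · exact hx' n hn
    · omega
    · exact hr n hn
  · rcases m with _ | m
    · rcases r with _ | ⟨k, r⟩
      · rw [st_even_one]
        refine ⟨by simp, fun n hn => ?_⟩
        simp at hn
        rcases hn with hn | rfl
        · exact hx' n hn
        · omega
      · rw [st_even_merge _ _ _ _ h]
        refine ⟨by simp, fun n hn => ?_⟩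
        simp at hn
        rcases hn with hn | rfl | hn
        · exact hx' n hn
        · omega
        · exact hr n (by simp [hn])
    · rw [st_even _ _ _ _ h]
      refine ⟨by simp, fun n hn => ?_⟩
      simp at hn
      rcases hn with hn | rfl | rfl | hn
      · exact hx' n hn
      · omega
      · omega
      · exact hr n hn

theorem st_shape (p c : ℕ) (s : List ℕ) (hp : p = 0 ∨ p = 1) :
    ∃ t tl, ∀ (u : List ℕ) (b : ℕ), u.length % 2 = p →
      star (u ++ [b]) ((c + 1) :: s) = u ++ (b + t) :: tl := by
  rcases hp with rfl | rfl
  · exact ⟨c, s, fun u b h => st_odd u s b c h⟩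
  · rcases c with _ | c
    · rcases s with _ | ⟨s0, s⟩
      · exact ⟨0, [], fun u b h => st_even_one u b⟩
      · exact ⟨s0, s, fun u b h => st_even_merge u s b s0 h⟩
    · exact ⟨0, (c + 1) :: s, fun u b h => st_even u s b c h⟩

theorem st_assoc {x y z : List ℕ} (hx : IsX x) (hy : IsX y) (hz : IsX z) :
    star (star x y) z = star x (star y z) := by
  by_cases hy1 : y = [1]
  · subst hy1
    rw [st_one_right hx, st_one_left hz]
  obtain ⟨x, a, rfl, -⟩ := isX_snoc hx
  obtain ⟨m, r, rfl, hr⟩ := isX_cons hy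
  obtain ⟨c, s, rfl, hs⟩ := isX_cons hz
  rcases List.eq_nil_or_concat r with rfl | ⟨r, b, rfl⟩
  · have hyz : star [m + 1] ((c + 1) :: s) = (m + c + 1) :: s := by
      simp [_root_.star]; omega
    rw [hyz]
    rcases Nat.mod_two_eq_zero_or_one x.length with h | h
    · rw [st_odd _ _ _ _ h, st_odd _ _ _ _ h, st_odd _ _ _ _ h, add_assoc (a + 1)]
    · obtain ⟨m, rfl⟩ := Nat.exists_eq_succ_of_ne_zero (n := m) (by rintro rfl; simp at hy1)
      have e : m.succ + c + 1 = (m + c) + 2 := by omega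
      rw [e, st_even _ _ _ _ h, st_even _ _ _ _ h]
      have := st_odd (x ++ [a + 1]) s (m + 1) c (by simp; omega)
      simp at this
      rw [this]; simp; omega
  · rw [List.concat_eq_append]
    obtain ⟨t, tl, ht⟩ := st_shape ((r.length + 1) % 2) c s (by omega)
    have k0 := ht ((m + 1) :: r) b (by simp)
    simp only [List.cons_append] at k0
    rw [k0]
    rcases Nat.mod_two_eq_zero_or_one x.length with h | h
    · rw [st_odd _ _ _ _ h, st_odd _ _ _ _ h]
      have := ht (x ++ (a + 1 + m) :: r) b (by simp; omega)
      simpa using this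
    · rcases m with _ | m
      · rcases r with _ | ⟨r0, r⟩
        · simp only [List.nil_append, zero_add]
          rw [st_even_merge _ _ _ _ h, st_even_merge _ _ _ _ h, ht _ _ (by simpa using h),
            add_assoc (a + 1)]
        · simp only [List.cons_append, zero_add]
          rw [st_even_merge _ _ _ _ h, st_even_merge _ _ _ _ h]
          have := ht (x ++ (a + 1 + r0) :: r) b (by simp; omega)
          simpa using this
      · rw [st_even _ _ _ _ h, st_even _ _ _ _ h]
        have := ht (x ++ (a + 1) :: (m + 1) :: r) b (by simp; omega)
        simpa using this

/-- `⋆` is an associative operation on `X` and `(1)` is a two-sided identity,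
so `(X, ⋆)` is a monoid. -/
theorem star_assoc_and_one :
    (∀ x y : List ℕ, IsX x → IsX y → IsX (star x y)) ∧
    (∀ x y z : List ℕ, IsX x → IsX y → IsX z →
      star (star x y) z = star x (star y z)) ∧
    (∀ x : List ℕ, IsX x → star x [1] = x ∧ star [1] x = x) := by
  exact ⟨fun _ _ => st_closed, fun _ _ _ => st_assoc,
    fun _ h => ⟨st_one_right h, st_one_left h⟩⟩
end

section
/- The monoid (X,⋆) is freely generated by L := (2) and R := (1,1): the monoid homomorphism from the free monoid on two generators to (X,⋆) sending one generator to (2) and the other to (1,1) is bijective. -/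
/-- The image of a generator: `true ↦ L = (2)`, `false ↦ R = (1,1)`. -/
def gen (b : Bool) : List ℕ := if b then [2] else [1, 1]

/-- The monoid homomorphism from the free monoid on two generators
(words over `Bool`) to `(X, ⋆)` sending the generators to `(2)` and `(1,1)`. -/
def toX (w : List Bool) : List ℕ := w.foldr (fun b acc => star (gen b) acc) [1]

theorem star_L (m : ℕ) (r : List ℕ) : star (gen true) (m :: r) = (m + 1) :: r := by
  simp [_root_.star, gen]; omega

theorem star_R1 : star (gen false) [1] = [1, 1] := by
  simp [_root_.star, gen]

theorem star_R2 (m : ℕ) (r : List ℕ) : star (gen false) (1 :: m :: r) = 1 :: (m + 1) :: r := by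
  simp [_root_.star, gen]; omega

theorem star_R3 (m : ℕ) (r : List ℕ) :
    star (gen false) ((m + 2) :: r) = 1 :: 1 :: (m + 1) :: r := by
  simp [_root_.star, gen]

theorem starX_one (m : ℕ) (r : List ℕ) : star [1] (m :: r) = m :: r := by
  simp [_root_.star]

theorem isX_gen (b : Bool) (y : List ℕ) (hy : IsX y) : IsX (star (gen b) y) := by
  obtain ⟨h0, h⟩ := hy
  cases b
  · match y, h0, h with
    | [1], _, _ => rw [star_R1]; simp [IsX]
    | 1 :: m :: r, _, h => rw [star_R2]; simp [IsX] at h ⊢; exact h.2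
    | (m + 2) :: r, _, h => rw [star_R3]; simp [IsX] at h ⊢; exact h
    | 0 :: r, _, h => simp at h
  · match y, h0, h with
    | m :: r, _, h => rw [star_L]; simp [IsX] at h ⊢; exact h.2

theorem isX_toX (w : List Bool) : IsX (toX w) := by
  induction w with
  | nil => simp [toX, IsX]
  | cons b w ih => exact isX_gen b _ ih

theorem star_shift (a b : ℕ) (x y : List ℕ) (hx : x ≠ []) :
    star (a :: b :: x) y = a :: b :: star x y := by
  obtain ⟨c, x, rfl⟩ := List.exists_cons_of_ne_nil hx
  have h : (a :: b :: c :: x).length % 2 = (c :: x).length % 2 := by simp; omega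
  unfold _root_.star
  rw [h]
  rcases y with _ | ⟨n, _ | ⟨n2, s⟩⟩ <;> simp only [] <;> split_ifs <;> simp [List.getLastD]

theorem star_head (a b c : ℕ) (x y : List ℕ) :
    ∃ z, star (b :: c :: x) y = b :: z ∧ star (a :: c :: x) y = a :: z := by
  unfold _root_.star
  rcases y with _ | ⟨n, _ | ⟨n2, s⟩⟩ <;> simp only [List.length_cons] <;> (try split_ifs) <;>
    simp [List.getLastD]

theorem star_assoc_gen (b : Bool) (x y : List ℕ) (hx : IsX x) (hy : IsX y) :
    star (star (gen b) x) y = star (gen b) (star x y) := by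
  obtain ⟨hx0, hx⟩ := hx
  obtain ⟨hy0, hy⟩ := hy
  obtain ⟨n, s, rfl⟩ := List.exists_cons_of_ne_nil hy0
  have hn : 0 < n := hy n (by simp)
  cases b
  · match x, hx0, hx with
    | [1], _, _ => rw [star_R1, starX_one]; rfl
    | 1 :: m :: [], _, h =>
      rw [star_R2]
      rcases s with _ | ⟨n2, s⟩ <;> simp [_root_.star, gen] <;> split_ifs <;> simp <;> omega
    | 1 :: m :: c :: r, _, h =>
      rw [star_R2, star_shift _ _ _ _ (by simp), star_shift _ _ _ _ (by simp), star_R2]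
    | [m + 2], _, h =>
      rw [star_R3, star_shift _ _ _ _ (by simp)]
      obtain ⟨n, rfl⟩ : ∃ k, n = k + 1 := ⟨n - 1, by omega⟩
      have e : ∀ k, star [k + 1] ((n + 1) :: s) = (k + n + 1) :: s := by
        intro k; simp [_root_.star]; omega
      rw [e, e (m + 1), show m + 1 + n + 1 = (m + n) + 2 by omega, star_R3]
    | (m + 2) :: c :: r, _, h =>
      rw [star_R3, star_shift _ _ _ _ (by simp)]
      obtain ⟨z, h1, h2⟩ := star_head (m + 1) (m + 2) c r (n :: s)
      rw [h1, h2, star_R3]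
    | 0 :: r, _, h => simp at h
  · match x, hx0, hx with
    | [m], _, h => rw [star_L]; simp [_root_.star, gen] at h ⊢; omega
    | m :: c :: r, _, h =>
      rw [star_L]
      obtain ⟨z, h1, h2⟩ := star_head (m + 1) m c r (n :: s)
      rw [h1, h2, star_L]

theorem toX_cons (b : Bool) (w : List Bool) : toX (b :: w) = star (gen b) (toX w) := rfl

theorem toX_append (u v : List Bool) : toX (u ++ v) = star (toX u) (toX v) := by
  induction u with
  | nil =>
    obtain ⟨m, r, h⟩ := List.exists_cons_of_ne_nil (isX_toX v).1
    rw [List.nil_append, h]; exact (starX_one m r).symm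
  | cons b u ih =>
    rw [List.cons_append, toX_cons, ih, toX_cons, star_assoc_gen _ _ _ (isX_toX u) (isX_toX v)]

theorem gen_inj (b c : Bool) (x y : List ℕ) (hx : IsX x) (hy : IsX y)
    (h : star (gen b) x = star (gen c) y) : b = c ∧ x = y := by
  obtain ⟨hx0, hx⟩ := hx
  obtain ⟨hy0, hy⟩ := hy
  rcases x with _ | ⟨_ | _ | m, _ | ⟨m2, r⟩⟩ <;> rcases y with _ | ⟨_ | _ | n, _ | ⟨n2, s⟩⟩ <;>
    cases b <;> cases c <;> simp [_root_.star, gen] at * <;> grind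

theorem gen_ne (b : Bool) (x : List ℕ) (hx : IsX x) : star (gen b) x ≠ [1] := by
  obtain ⟨hx0, hx⟩ := hx
  rcases x with _ | ⟨_ | _ | m, _ | ⟨m2, r⟩⟩ <;> cases b <;> simp [_root_.star, gen] at * <;> omega

theorem toX_inj : Function.Injective toX := by
  intro u
  induction u with
  | nil =>
    intro v h
    cases v with
    | nil => rfl
    | cons c v => exact absurd h.symm (gen_ne c _ (isX_toX v))
  | cons b u ih =>
    intro v h
    cases v with
    | nil => exact absurd h (gen_ne b _ (isX_toX u))
    | cons c v =>
      obtain ⟨rfl, h2⟩ := gen_inj b c _ _ (isX_toX u) (isX_toX v) h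
      rw [ih h2]

theorem toX_surj (k : ℕ) : ∀ a : List ℕ, a.sum ≤ k → IsX a → ∃ w, toX w = a := by
  induction k with
  | zero =>
    rintro a hk ⟨h0, h⟩
    obtain ⟨m, r, rfl⟩ := List.exists_cons_of_ne_nil h0
    have := h m (by simp)
    simp at hk; omega
  | succ k ih =>
    rintro a hk ⟨h0, h⟩
    match a, h0, h, hk with
    | [1], _, _, _ => exact ⟨[], rfl⟩
    | [1, 1], _, _, _ => exact ⟨[false], star_R1⟩
    | 1 :: 1 :: (m + 1) :: r, _, h, hk =>
      obtain ⟨w, hw⟩ := ih ((m + 2) :: r) (by simp at hk ⊢; omega)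
        ⟨by simp, by simp at h ⊢; exact h⟩
      exact ⟨false :: w, by rw [toX_cons, hw, star_R3]⟩
    | 1 :: 1 :: 0 :: r, _, h, hk => simp at h
    | 1 :: 0 :: r, _, h, hk => simp at h
    | 1 :: (m + 2) :: r, _, h, hk =>
      obtain ⟨w, hw⟩ := ih (1 :: (m + 1) :: r) (by simp at hk ⊢; omega)
        ⟨by simp, by simp at h ⊢; exact h⟩
      exact ⟨false :: w, by rw [toX_cons, hw, star_R2]⟩
    | (m + 2) :: r, _, h, hk =>
      obtain ⟨w, hw⟩ := ih ((m + 1) :: r) (by simp at hk ⊢; omega)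
        ⟨by simp, by simp at h ⊢; exact h⟩
      exact ⟨true :: w, by rw [toX_cons, hw, star_L]⟩
    | 0 :: r, _, h, hk => simp at h

/-- `(X, ⋆)` is freely generated by `L = (2)` and `R = (1,1)`: the monoid
homomorphism from the free monoid on two generators is bijective onto `X`. -/
theorem star_free_on_L_R :
    toX [] = [1] ∧
    (∀ u v : List Bool, toX (u ++ v) = star (toX u) (toX v)) ∧
    Function.Injective toX ∧
    (∀ a : List ℕ, IsX a ↔ ∃ w : List Bool, toX w = a) := by
  refine ⟨rfl, toX_append, toX_inj, fun a => ⟨fun h => toX_surj _ a le_rfl h, ?_⟩⟩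
  rintro ⟨w, rfl⟩
  exact isX_toX w
end

section
/- K is an involutive monoid automorphism of (X,⋆): for all x, y ∈ X, K(x⋆y) = K(x)⋆K(y) and K(K(x)) = x, and K exchanges the generators, K((2)) = (1,1) and K((1,1)) = (2). -/
theorem K_one_cons (n : ℕ) (r : List ℕ) : K (1 :: n :: r) = (n + 1) :: r := rfl

theorem K_add_two (n : ℕ) (r : List ℕ) : K ((n + 2) :: r) = 1 :: (n + 1) :: r := by
  cases r <;> simp [K]

theorem K_one : K [1] = [1] := rfl

theorem X_cases (x : List ℕ) (h : IsX x) :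
    x = [1] ∨ (∃ n r, x = 1 :: (n + 1) :: r) ∨ (∃ n r, x = (n + 2) :: r) := by
  obtain ⟨h0, h1⟩ := h
  match x, h0, h1 with
  | 0 :: r, _, h1 => simp at h1
  | [1], _, _ => simp
  | 1 :: 0 :: r, _, h1 => simp at h1
  | 1 :: (n + 1) :: r, _, _ => right; left; exact ⟨n, r, rfl⟩
  | (n + 2) :: r, _, _ => right; right; exact ⟨n, r, rfl⟩

theorem K_star (x y : List ℕ) (hx : IsX x) (hy : IsX y) :
    K (star x y) = star (K x) (K y) := by
  have L1 : ∀ (b : ℕ) (t : List ℕ) (a : ℕ), (b :: (t ++ [a])).dropLast = b :: t := by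
    intro b t a
    rw [← List.cons_append, List.dropLast_concat]
  have L2 : ∀ (b c : ℕ) (t : List ℕ) (a : ℕ),
      (b :: c :: (t ++ [a])).dropLast = b :: c :: t := by
    intro b c t a
    rw [← List.cons_append, ← List.cons_append, List.dropLast_concat]
  have L3 : ∀ (b d : ℕ) (t : List ℕ) (a : ℕ), (b :: (t ++ [a])).getLastD d = a := by
    intro b d t a
    rw [← List.cons_append, List.getLastD_eq_getLast?, List.getLast?_concat]; rfl
  have L4 : ∀ (b c d : ℕ) (t : List ℕ) (a : ℕ), (b :: c :: (t ++ [a])).getLastD d = a := by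
    intro b c d t a
    rw [← List.cons_append, ← List.cons_append, List.getLastD_eq_getLast?, List.getLast?_concat]; rfl
  rcases X_cases x hx with rfl | ⟨n, r, rfl⟩ | ⟨n, r, rfl⟩
  · rcases X_cases y hy with rfl | ⟨m, s, rfl⟩ | ⟨m, s, rfl⟩ <;>
    simp [_root_.star, K_one_cons, K_add_two, K_one]
  all_goals
    rcases List.eq_nil_or_concat r with rfl | ⟨t, a, rfl⟩
    · rcases X_cases y hy with rfl | ⟨m, s, rfl⟩ | ⟨m, s, rfl⟩ <;>
      simp [_root_.star, K_one_cons, K_add_two, K_one, K] <;> grind [K_one_cons, K_add_two]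
    · rw [List.concat_eq_append]
      rcases Nat.mod_two_eq_zero_or_one t.length with ht | ht
      all_goals
        have h1 : (t.length + 1) % 2 = 1 - t.length % 2 := by omega
        have h2 : (t.length + 1 + 1) % 2 = t.length % 2 := by omega
        have h3 : (t.length + 1 + 1 + 1) % 2 = 1 - t.length % 2 := by omega
        rcases X_cases y hy with rfl | ⟨m, s, rfl⟩ | ⟨m, s, rfl⟩ <;>
        simp only [_root_.star, K_one_cons, K_add_two, K_one, L1, L2, L3, L4, List.length_cons,
          List.length_append, List.length_nil, Nat.zero_add, h1, h2, h3, ht] <;>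
        simp [K_one_cons, K_add_two, K_one] <;> omega

/-- `K` is an involutive monoid automorphism of `(X, ⋆)` exchanging the
generators `(2)` and `(1,1)`. -/
theorem K_involutive_automorphism :
    (∀ x y : List ℕ, IsX x → IsX y → K (star x y) = star (K x) (K y)) ∧
    (∀ x : List ℕ, IsX x → K (K x) = x) ∧
    K [2] = [1, 1] ∧ K [1, 1] = [2] := by
  refine ⟨K_star, ?_, rfl, rfl⟩
  intro x hx
  rcases X_cases x hx with rfl | ⟨n, r, rfl⟩ | ⟨n, r, rfl⟩ <;>
  simp [K_one_cons, K_add_two, K_one]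
end

section
/- For every a ∈ X with a ≠ (1), the tuple-level Farey map corresponds to the usual Farey map on rationals: θ(T_F(a)) = θ(a)/(1−θ(a)) if θ(a) < 1/2, and θ(T_F(a)) = (1−θ(a))/θ(a) if θ(a) ≥ 1/2. -/
theorem theta_pos_le (t : List ℕ) (ht : ∀ n ∈ t, 0 < n) : 0 < theta t ∧ theta t ≤ 1 := by
  induction t with
  | nil => simp [theta, cf]
  | cons n t ih =>
    obtain ⟨h0, _⟩ := ih (fun m hm => ht m (List.mem_cons_of_mem _ hm))
    have hn : (1 : ℚ) ≤ n := by exact_mod_cast ht n List.mem_cons_self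
    have e : theta (n :: t) = 1 / (n + theta t) := rfl
    rw [e]
    refine ⟨by positivity, ?_⟩
    rw [div_le_one (by positivity)]
    linarith

/-- For `a ∈ X` with `a ≠ (1)`, the tuple-level Farey map corresponds to the
usual Farey map on rationals: `θ(T_F a) = θ a / (1 − θ a)` if `θ a < 1/2`, and
`θ(T_F a) = (1 − θ a) / θ a` if `θ a ≥ 1/2`. -/
theorem theta_TF (a : List ℕ) (h : IsX a) (h1 : a ≠ [1]) :
    (theta a < 1 / 2 → theta (TF a) = theta a / (1 - theta a)) ∧
    (1 / 2 ≤ theta a → theta (TF a) = (1 - theta a) / theta a) := by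
  obtain ⟨hne, hpos⟩ := h
  match a, hne with
  | n :: t, _ =>
    obtain ⟨h0, hle⟩ := theta_pos_le t (fun m hm => hpos m (List.mem_cons_of_mem _ hm))
    have hn := hpos n List.mem_cons_self
    have e : theta (n :: t) = 1 / (n + theta t) := rfl
    match n, hn with
    | 1, _ =>
      have e2 : TF (1 :: t) = t := rfl
      rw [e2, e]
      push_cast
      have hp : (0 : ℚ) < 1 + theta t := by linarith
      constructor
      · intro hlt
        rw [div_lt_div_iff₀ hp (by norm_num)] at hlt
        linarith
      · intro _
        field_simp
        ring
    | m + 2, _ =>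
      have e2 : theta (TF ((m + 2) :: t)) = 1 / (((m + 1 : ℕ) : ℚ) + theta t) := rfl
      rw [e2, e]
      push_cast
      have hm : (0 : ℚ) ≤ m := Nat.cast_nonneg m
      have hp : (0 : ℚ) < m + 2 + theta t := by linarith
      have hq : (0 : ℚ) < m + 1 + theta t := by linarith
      constructor
      · intro _
        have e3 : 1 - 1 / ((m : ℚ) + 2 + theta t) = (m + 1 + theta t) / (m + 2 + theta t) := by
          field_simp
          ring
        rw [e3]
        field_simp
      · intro hge
        rw [div_le_div_iff₀ (by norm_num) hp] at hge
        linarith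
end

section
/- For every a = (n_1,…,n_k) ∈ X with a ≠ (1), the Lebesgue transition function satisfies π_λ(a) := |I(a)|/|I(T_{φF}(a))| = 1 − [0;n_k,n_{k−1},…,n_1]. -/
/-- Data attached to a tuple: numerators and denominators of convergents. -/
structure Conv (b : List ℕ) (p p' q q' : ℚ) : Prop where
  hq : 0 < q
  hq' : 0 ≤ q'
  det : |p' * q - p * q'| = 1
  rev : cf b.reverse = q' / q
  ev : ∀ l : List ℕ, 0 ≤ cf l → cf (b ++ l) = (p + cf l * p') / (q + cf l * q')

theorem Conv.nil : Conv [] 0 1 1 0 := by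
  constructor <;> simp [cf]

theorem Conv.snoc {b : List ℕ} {p p' q q' : ℚ} (h : Conv b p p' q q') {n : ℕ} (hn : 0 < n) :
    Conv (b ++ [n]) (n * p + p') p (n * q + q') q := by
  have hn' : (0 : ℚ) < n := by exact_mod_cast hn
  obtain ⟨hq, hq', det, rev, ev⟩ := h
  refine ⟨by positivity, hq.le, ?_, ?_, ?_⟩
  · rw [← det, ← abs_neg]
    congr 1
    ring
  · have : (0 : ℚ) < n * q + q' := by positivity
    simp only [List.reverse_append, List.reverse_cons, List.reverse_nil, List.nil_append,
      List.singleton_append, cf, rev]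
    field_simp
  · intro l hl
    have h2 : cf (n :: l) = 1 / (n + cf l) := rfl
    have h1 : 0 ≤ cf (n :: l) := by rw [h2]; positivity
    rw [List.append_assoc, List.singleton_append, ev _ h1, h2]
    generalize cf l = x at *
    have h3 : 0 < (n : ℚ) + x := by positivity
    have h4 : 0 < q + 1 / (n + x) * q' := by positivity
    have h5 : 0 < n * q + q' + x * q := by positivity
    rw [div_eq_div_iff h4.ne' h5.ne']
    field_simp
    ring

theorem Conv.exists (b : List ℕ) (hb : ∀ n ∈ b, 0 < n) : ∃ p p' q q', Conv b p p' q q' := by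
  induction b using List.reverseRecOn with
  | nil => exact ⟨_, _, _, _, Conv.nil⟩
  | append_singleton c m ih =>
    obtain ⟨p, p', q, q', h⟩ := ih (fun n hn => hb n (by simp [hn]))
    exact ⟨_, _, _, _, h.snoc (hb m (by simp))⟩

theorem Conv.cf_eq {b : List ℕ} {p p' q q' : ℚ} (h : Conv b p p' q q') : cf b = p / q := by
  have := h.ev [] (by simp [cf])
  simpa [cf] using this

theorem Conv.ilen {b : List ℕ} {p p' q q' : ℚ} (h : Conv b p p' q q') {n : ℕ} (hn : 0 < n) :
    ilen (b ++ [n]) = 1 / (q * (n * q + q')) := by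
  have hn' : (0 : ℚ) < n := by exact_mod_cast hn
  have hq := h.hq
  have hq' := h.hq'
  have h5 : 0 < n * q + q' := by positivity
  rw [_root_.ilen, List.dropLast_concat, (h.snoc hn).cf_eq, h.cf_eq, ← h.det,
    div_sub_div _ _ h5.ne' hq.ne', abs_div, abs_of_pos (mul_pos h5 hq), mul_comm q (n * q + q')]
  congr 2
  ring

/-- The Lebesgue transition function satisfies
`π_λ(a) = |I(a)| / |I(T_{φF} a)| = 1 − [0; n_k, n_{k−1}, …, n₁]`. -/
theorem pi_lambda_formula (a : List ℕ) (h : IsX a) (h1 : a ≠ [1]) :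
    ilen a / ilen (TpF a) = 1 - cf a.reverse := by
  obtain ⟨hne, hpos⟩ := h
  induction a using List.reverseRecOn with
  | nil => exact absurd rfl hne
  | append_singleton b n _ =>
    have hn : 0 < n := hpos n (by simp)
    have hb : ∀ m ∈ b, 0 < m := fun m hm => hpos m (by simp [hm])
    obtain ⟨k, rfl⟩ : ∃ k, n = k + 1 := ⟨n - 1, by omega⟩
    rcases Nat.eq_zero_or_pos k with rfl | hk
    · induction b using List.reverseRecOn with
      | nil => simp at h1
      | append_singleton c m _ =>
        have hm : 0 < m := hb m (by simp)
        obtain ⟨p, p', q, q', h⟩ := Conv.exists c (fun n hn => hb n (by simp [hn]))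
        have hT : TpF (c ++ [m] ++ [0 + 1]) = c ++ [m] := by simp [TpF, TF]
        have hs := h.snoc hm
        rw [hT, hs.ilen hn, h.ilen hm, (hs.snoc hn).rev]
        have h1 := h.hq
        have h2 := hs.hq
        generalize (m : ℚ) * q + q' = r at *
        push_cast
        have h3 : 0 < (0 + 1) * r + q := by positivity
        field_simp
        ring
    · obtain ⟨p, p', q, q', h⟩ := Conv.exists b hb
      have hT : TpF (b ++ [k + 1]) = b ++ [k] := by
        obtain ⟨j, rfl⟩ : ∃ j, k = j + 1 := ⟨k - 1, by omega⟩
        simp [TpF, TF]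
      rw [hT, h.ilen hn, h.ilen hk, (h.snoc hn).rev]
      have h1 := h.hq
      have h2 := (h.snoc hn).hq
      have h3 := (h.snoc hk).hq
      push_cast at *
      generalize hr : ((k : ℚ) + 1) * q + q' = r at *
      have h4 : (k : ℚ) * q + q' = r - q := by rw [← hr]; ring
      rw [h4] at h3 ⊢
      have h5 := h3.ne'
      field_simp
end

section
/- The Lebesgue transition function is K-invariant: for every a ∈ X with a ≠ (1), π_λ(K(a)) = π_λ(a), where π_λ(a) := |I(a)|/|I(T_{φF}(a))|. -/
theorem cf_nonneg_aux (l : List ℕ) : 0 ≤ cf l := by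
  induction l with
  | nil => simp [cf]
  | cons n t ih => simp only [cf]; positivity

theorem cf_K_aux (n : ℕ) (hn : 0 < n) (t : List ℕ) :
    cf (1 :: n :: t) = 1 - cf ((n + 1) :: t) := by
  have h := cf_nonneg_aux t
  have hn' : (0 : ℚ) < n := by exact_mod_cast hn
  have h1 : (n : ℚ) + cf t ≠ 0 := by positivity
  have h2 : (n : ℚ) + 1 + cf t ≠ 0 := by positivity
  have h3 : 1 + 1 / ((n : ℚ) + cf t) ≠ 0 := by positivity
  simp only [cf]
  push_cast
  rw [eq_sub_iff_add_eq, div_add_div _ _ h3 h2, div_eq_one_iff_eq (mul_ne_zero h3 h2)]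
  field_simp
  ring

theorem ilen_K_aux (n : ℕ) (hn : 0 < n) (t : List ℕ) :
    ilen (1 :: n :: t) = ilen ((n + 1) :: t) := by
  unfold ilen
  rw [cf_K_aux n hn]
  cases t with
  | nil =>
    simp [cf]
  | cons m s =>
    simp only [List.dropLast_cons_cons]
    rw [cf_K_aux n hn, abs_sub_comm]
    congr 1
    ring

theorem TpF_append_aux (l : List ℕ) (m : ℕ) :
    TpF (l ++ [m]) = if m = 1 then l else l ++ [m - 1] := by
  unfold TpF
  split_ifs with h
  · subst h; simp [TF]
  · simp [TF]

theorem ilen_TpF_K_aux (n : ℕ) (hn : 0 < n) (t : List ℕ) :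
    ilen (TpF (1 :: n :: t)) = ilen (TpF ((n + 1) :: t)) := by
  rcases List.eq_nil_or_concat' t with rfl | ⟨s, m, rfl⟩
  · have e1 := TpF_append_aux [1] n
    have e2 := TpF_append_aux [] (n + 1)
    simp only [List.cons_append, List.nil_append] at e1 e2
    rw [e1, e2, if_neg (show ¬ (n + 1 = 1) by omega)]
    split_ifs with h
    · subst h; rfl
    · rw [ilen_K_aux (n - 1) (by omega)]
      congr 2
      omega
  · have e1 := TpF_append_aux (1 :: n :: s) m
    have e2 := TpF_append_aux ((n + 1) :: s) m
    simp only [List.cons_append] at e1 e2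
    rw [e1, e2]
    split_ifs
    · exact ilen_K_aux n hn _
    · exact ilen_K_aux n hn _

/-- The Lebesgue transition function `π_λ(a) = |I(a)| / |I(T_{φF} a)|` is
`K`-invariant. -/
theorem pi_lambda_K_invariant (a : List ℕ) (h : IsX a) (h1 : a ≠ [1]) :
    ilen (K a) / ilen (TpF (K a)) = ilen a / ilen (TpF a) := by
  obtain ⟨h0, hp⟩ := h
  match a, h0, hp, h1 with
  | 0 :: t, _, hp, _ => simp at hp
  | [1], _, _, h1 => exact absurd rfl h1
  | 1 :: n :: t, _, hp, _ =>
    have hn : 0 < n := hp n (by simp)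
    have e : K (1 :: n :: t) = (n + 1) :: t := by simp [K]
    rw [e, ilen_K_aux n hn, ilen_TpF_K_aux n hn]
  | (n + 2) :: t, _, _, _ =>
    have e : K ((n + 2) :: t) = 1 :: (n + 1) :: t := by simp [K]
    rw [e, ilen_K_aux _ (by omega), ilen_TpF_K_aux _ (by omega)]
end

section
/- J is an involution of X: for every a ∈ X, J(J(a)) = a. -/
def incH : List ℕ → List ℕ
  | [] => []
  | h :: t => (h + 1) :: t

theorem Jmid_append (l : List ℕ) : ∀ (h : ℕ) (t s : List ℕ),
    Jmid l (h :: t ++ s) = Jmid l (h :: t) ++ s := by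
  induction l with
  | nil => intro h t s; rfl
  | cons n l ih =>
    intro h t s
    by_cases hn : n = 1
    · simp only [Jmid, hn, if_true, List.cons_append]
      exact ih (h + 1) t s
    · simp only [Jmid, hn, if_false]
      have := ih 2 (List.replicate (n - 2) 1 ++ (h :: t)) s
      simpa using this

theorem Jmid_inc (l : List ℕ) : ∀ h : ℕ,
    (Jmid l [h + 1]).reverse = incH (Jmid l [h]).reverse ∧ Jmid l [h] ≠ [] := by
  induction l with
  | nil => intro h; simp [Jmid, incH]
  | cons n l ih =>
    intro h
    by_cases hn : n = 1
    · simp only [Jmid, hn, if_true]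
      exact ih (h + 1)
    · simp only [Jmid, hn, if_false]
      have h1 := Jmid_append l 2 (List.replicate (n - 2) 1) [h]
      have h2 := Jmid_append l 2 (List.replicate (n - 2) 1) [h + 1]
      simp only [List.cons_append] at h1 h2
      rw [h1, h2]
      simp [incH]

theorem incH_append (a b : List ℕ) (h : a ≠ []) : incH (a ++ b) = incH a ++ b := by
  cases a with
  | nil => exact absurd rfl h
  | cons x t => rfl

theorem J_inc (n : ℕ) (hn : 0 < n) (r : List ℕ) : J ((n + 1) :: r) = 1 :: J (n :: r) := by
  cases r with
  | nil => simp [J, List.replicate_succ]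
  | cons m r =>
    obtain ⟨k, rfl⟩ : ∃ k, n = k + 1 := ⟨n - 1, by omega⟩
    simp only [J, Nat.add_sub_cancel]
    have h1 := Jmid_append (m :: r).dropLast 2 (List.replicate k 1) [1]
    rw [List.replicate_succ']
    simp only [List.cons_append] at h1
    rw [h1]
    simp

theorem J_one (m : ℕ) (hm : 0 < m) (r : List ℕ) : J (1 :: m :: r) = incH (J (m :: r)) := by
  obtain ⟨k, rfl⟩ : ∃ k, m = k + 1 := ⟨m - 1, by omega⟩
  cases r with
  | nil => simp [J, Jmid, List.replicate_succ, incH]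
  | cons p r =>
    have e1 : ((k + 1) :: p :: r).dropLast = (k + 1) :: (p :: r).dropLast := rfl
    have e2 : ((k + 1) :: p :: r).getLastD 1 = (p :: r).getLastD 1 := by simp
    simp only [J, e1, e2]
    generalize (p :: r).dropLast = l
    generalize List.replicate ((p :: r).getLastD 1 - 1) 1 = w
    cases k with
    | zero =>
      have := Jmid_inc l 2
      rw [incH_append _ _ (by simpa using this.2)]
      simp [Jmid, ← this.1]
    | succ k =>
      have h1 := Jmid_append l 2 (List.replicate k 1) [1]
      have h2 := Jmid_append l 2 (List.replicate k 1) [2]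
      simp only [List.cons_append] at h1 h2
      simp only [Jmid, Nat.add_sub_cancel]
      rw [if_neg (by omega), List.replicate_succ', h1]
      simp [h2, incH]

theorem J_aux (N : ℕ) : ∀ a : List ℕ, a.sum = N → IsX a → J (J a) = a ∧ IsX (J a) := by
  induction N using Nat.strong_induction_on with
  | _ N ih =>
    intro a hs ha
    obtain ⟨hne, hpos⟩ := ha
    match a, hne with
    | n :: r, _ =>
      have hn : 0 < n := hpos n (by simp)
      have hr : ∀ x ∈ r, 0 < x := fun x hx => hpos x (by simp [hx])
      simp only [List.sum_cons] at hs
      by_cases h1 : n = 1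
      · subst h1
        cases r with
        | nil => simp [J, IsX]
        | cons m r =>
          obtain ⟨hj, hx⟩ := ih _ (by omega) (m :: r) rfl ⟨by simp, hr⟩
          rw [J_one m (hr m (by simp))]
          revert hj hx
          cases J (m :: r) with
          | nil => intro _ hx; exact absurd rfl hx.1
          | cons q t =>
            intro hj hx
            refine ⟨?_, by simp [incH], ?_⟩
            · simp only [incH]
              rw [J_inc q (hx.2 q (by simp)), hj]
            · intro x hm
              simp only [incH, List.mem_cons] at hm
              rcases hm with rfl | hm
              · omega
              · exact hx.2 x (by simp [hm])
      · obtain ⟨k, rfl⟩ : ∃ k, n = k + 1 := ⟨n - 1, by omega⟩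
        obtain ⟨hj, hx⟩ := ih (k + r.sum) (by omega) (k :: r) (by simp) ⟨by simp, by
          intro x hm
          rcases List.mem_cons.1 hm with rfl | hm
          · omega
          · exact hr x hm⟩
        rw [J_inc k (by omega)]
        revert hj hx
        cases J (k :: r) with
        | nil => intro _ hx; exact absurd rfl hx.1
        | cons q t =>
          intro hj hx
          refine ⟨?_, by simp, ?_⟩
          · rw [J_one q (hx.2 q (by simp)), hj]
            rfl
          · intro x hm
            rcases List.mem_cons.1 hm with rfl | hm
            · omega
            · exact hx.2 x hm

/-- `J` is an involution of `X`. -/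
theorem J_involutive (a : List ℕ) (h : IsX a) : J (J a) = a := by
  exact (J_aux _ a rfl h).1
end

section
/- J preserves the depth on the Farey tree: for every a = (n_1,…,n_k) ∈ X, ‖J(a)‖ = ‖a‖, where ‖(n_1,…,n_k)‖ := n_1+⋯+n_k−1. -/
theorem Jmid_sum (l : List ℕ) : ∀ out : List ℕ, (∀ n ∈ l, 0 < n) →
    (Jmid l out).sum = out.sum + l.sum := by
  induction l with
  | nil => intro out _; simp [Jmid]
  | cons n t ih =>
    intro out h
    have hn : 0 < n := h n (by simp)
    have ht : ∀ m ∈ t, 0 < m := fun m hm => h m (by simp [hm])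
    unfold Jmid
    split_ifs with h1
    · rw [ih _ ht]
      cases out <;> simp [h1] <;> omega
    · rw [ih _ ht]
      simp
      omega

/-- `J` preserves the depth on the Farey tree: `‖J a‖ = ‖a‖`, where
`‖(n₁, …, n_k)‖ = n₁ + ⋯ + n_k − 1`. -/
theorem J_preserves_depth (a : List ℕ) (h : IsX a) :
    (J a).sum - 1 = a.sum - 1 := by
  congr 1
  obtain ⟨h0, hp⟩ := h
  match a, h0, hp with
  | [n], _, _ => simp [J]
  | n :: m :: r, _, hp =>
    have hn : 0 < n := hp n (by simp)
    obtain ⟨d, x, hx⟩ : ∃ d x, m :: r = d ++ [x] :=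
      ⟨_, _, (List.dropLast_append_getLast (by simp : m :: r ≠ [])).symm⟩
    have hJ : J (n :: m :: r) = (Jmid (m :: r).dropLast (2 :: List.replicate (n - 1) 1)).reverse
        ++ List.replicate ((m :: r).getLastD 1 - 1) 1 := rfl
    rw [hJ]
    rw [hx] at hp ⊢
    have hxp : 0 < x := hp x (by simp)
    have hd : ∀ y ∈ d, 0 < y := fun y hy => hp y (by simp [hy])
    have hl : (d ++ [x]).getLastD 1 = x := by simp
    rw [hl, List.dropLast_concat, List.sum_append, List.sum_reverse, Jmid_sum d _ hd]
    simp
    omega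
end

section
/- J commutes with K: for every a ∈ X, J(K(a)) = K(J(a)). -/
theorem Jmid_form (l : List ℕ) : ∃ (p : List ℕ) (c : ℕ), ∀ (h : ℕ) (s : List ℕ),
    Jmid l (h :: s) = p ++ (h + c) :: s := by
  induction l with
  | nil => exact ⟨[], 0, fun h s => by simp [Jmid]⟩
  | cons n l ih =>
    obtain ⟨p, c, hp⟩ := ih
    by_cases hn : n = 1
    · exact ⟨p, 1 + c, fun h s => by simp [Jmid, hn, hp, add_assoc]⟩
    · exact ⟨p ++ (2 + c) :: List.replicate (n - 2) 1, 0, fun h s => by simp [Jmid, hn, hp]⟩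

theorem rot_ones (m : ℕ) (s : List ℕ) :
    List.replicate m 1 ++ 1 :: s = 1 :: (List.replicate m 1 ++ s) := by
  induction m with
  | zero => rfl
  | succ m ih => simp [List.replicate_succ, ih]

theorem J_comm_K (a : List ℕ) (h : IsX a) : J (K a) = K (J a) := by
  obtain ⟨h0, hpos⟩ := h
  match a, h0, hpos with
  | [0], _, hpos => simp at hpos
  | [1], _, _ => simp [J, K]
  | [n + 2], _, _ => simp [J, K, Jmid, List.replicate_succ]
  | 0 :: _ :: _, _, hpos => simp at hpos
  | [1, 0], _, hpos => simp at hpos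
  | [1, m + 1], _, _ => simp [J, K, Jmid, List.replicate_succ]
  | 1 :: 0 :: _ :: _, _, hpos => simp at hpos
  | 1 :: 1 :: x :: r, _, _ =>
    obtain ⟨p, c, hp⟩ := Jmid_form (x :: r).dropLast
    have e : 3 + c = (1 + c) + 2 := by omega
    have e2 : 2 + c = (1 + c) + 1 := by omega
    simp [J, K, Jmid, hp, e, e2]
  | 1 :: (m + 2) :: x :: r, _, _ =>
    obtain ⟨p, c, hp⟩ := Jmid_form (x :: r).dropLast
    simp [J, K, Jmid, hp, List.replicate_succ, rot_ones]
  | 2 :: x :: r, _, _ =>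
    obtain ⟨p, c, hp⟩ := Jmid_form (x :: r).dropLast
    simp [J, K, Jmid, hp]
    omega
  | (n + 3) :: x :: r, _, _ =>
    obtain ⟨p, c, hp⟩ := Jmid_form (x :: r).dropLast
    simp [J, K, Jmid, hp, List.replicate_succ, rot_ones]
end

section
/- J preserves siblings in the Farey tree, hence defines a tree automorphism: for every a = (n_1,…,n_k) ∈ X, whose two children are c_+(a) := (n_1,…,n_{k−1},n_k+1) and c_0(a) := (n_1,…,n_k,1), the unordered pair {J(c_+(a)), J(c_0(a))} equals the unordered pair {c_+(J(a)), c_0(J(a))}. -/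
/-- The child `(n₁, …, n_{k−1}, n_k + 1)` of a node in the Farey tree. -/
def cplus (a : List ℕ) : List ℕ := a.dropLast ++ [a.getLastD 0 + 1]

/-- The child `(n₁, …, n_k, 1)` of a node in the Farey tree. -/
def czero (a : List ℕ) : List ℕ := a ++ [1]

lemma J_snoc (n : ℕ) (mid : List ℕ) (l : ℕ) :
    J (n :: (mid ++ [l])) =
      (Jmid mid (2 :: List.replicate (n - 1) 1)).reverse ++ List.replicate (l - 1) 1 := by
  have : J (n :: (mid ++ [l])) =
      (Jmid (mid ++ [l]).dropLast (2 :: List.replicate (n - 1) 1)).reverse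
        ++ List.replicate ((mid ++ [l]).getLastD 1 - 1) 1 := by
    cases mid <;> rfl
  rw [this]
  simp

lemma Jmid_append_s17 (x y out : List ℕ) : Jmid (x ++ y) out = Jmid y (Jmid x out) := by
  induction x generalizing out with
  | nil => rfl
  | cons n x ih =>
    simp only [List.cons_append, Jmid]
    split_ifs <;> exact ih _

lemma cplus_snoc (x : List ℕ) (l : ℕ) : cplus (x ++ [l]) = x ++ [l + 1] := by
  simp [cplus]

lemma J_cplus (a : List ℕ) (h : IsX a) : J (cplus a) = czero (J a) := by
  obtain ⟨h0, hp⟩ := h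
  rcases a with _ | ⟨n, t⟩
  · exact absurd rfl h0
  rcases List.eq_nil_or_concat t with rfl | ⟨mid, l, rfl⟩
  · simp [cplus, czero, J, List.replicate_succ']
  · have hl : 0 < l := hp l (by simp)
    obtain ⟨l, rfl⟩ := Nat.exists_eq_succ_of_ne_zero hl.ne'
    have e := cplus_snoc (n :: mid) (l + 1)
    simp only [List.cons_append] at e
    simp only [List.concat_eq_append, Nat.succ_eq_add_one] at *
    rw [e, J_snoc, J_snoc]
    simp [czero, List.replicate_succ']

lemma J_czero (a : List ℕ) (h : IsX a) : J (czero a) = cplus (J a) := by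
  obtain ⟨h0, hp⟩ := h
  rcases a with _ | ⟨n, t⟩
  · exact absurd rfl h0
  have e : czero (n :: t) = n :: (t ++ [1]) := rfl
  rw [e, J_snoc]
  rcases List.eq_nil_or_concat t with rfl | ⟨mid, l, rfl⟩
  · have hl : 0 < n := hp n (by simp)
    obtain ⟨n, rfl⟩ := Nat.exists_eq_succ_of_ne_zero hl.ne'
    simp only [J, Jmid, Nat.succ_eq_add_one]
    rw [List.replicate_succ', cplus_snoc]
    simp
  · have hl : 0 < l := hp l (by simp)
    obtain ⟨l, rfl⟩ := Nat.exists_eq_succ_of_ne_zero hl.ne'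
    simp only [List.concat_eq_append, Nat.succ_eq_add_one]
    rw [J_snoc, Jmid_append_s17]
    generalize Jmid mid _ = R
    rcases l with _ | l
    · rcases R with _ | ⟨r, R⟩
      · simp [Jmid, cplus]
      · simp [Jmid, cplus_snoc]
    · have e2 : R.reverse ++ List.replicate (l + 1 + 1 - 1) 1
          = (R.reverse ++ List.replicate l 1) ++ [1] := by
        simp [List.replicate_succ']
      rw [e2, cplus_snoc]
      simp [Jmid]

/-- `J` preserves siblings in the Farey tree, hence defines a tree automorphism:
the unordered pair of the `J`-images of the two children of `a` equals the
unordered pair of the two children of `J a`. -/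
theorem J_preserves_siblings (a : List ℕ) (h : IsX a) :
    ({J (cplus a), J (czero a)} : Set (List ℕ)) = {cplus (J a), czero (J a)} := by
  rw [J_cplus a h, J_czero a h, Set.pair_comm]
end

section
/- The product of the Lebesgue transition probabilities along the lineage of a node equals the length of its Farey interval: for every a = (n_1,…,n_k) ∈ X, the product over i = 0, 1, …, ‖a‖−1 of (1 − [0; reversal of T_{φF}^i(a)]) equals 1/(⟨n_1,…,n_{k−1}⟩·⟨n_1,…,n_k⟩); in particular this product is the reciprocal of a positive integer. -/
lemma contAux_pos : ∀ b : List ℕ, (∀ n ∈ b, 0 < n) → 0 < contAux b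
  | [], _ => by simp [contAux]
  | [n], h => by simpa [contAux] using h
  | n :: m :: r, h => by
    have h1 := contAux_pos (m :: r) (fun x hx => h x (List.mem_cons_of_mem _ hx))
    have h2 := h n (by simp)
    simp only [contAux]
    positivity

lemma cf_eq : ∀ (t : List ℕ) (n : ℕ), (∀ x ∈ n :: t, 0 < x) →
    cf (n :: t) = (contAux t : ℚ) / contAux (n :: t)
  | [], n, h => by simp [cf, contAux]
  | m :: r, n, h => by
    have hr : ∀ x ∈ m :: r, 0 < x := fun x hx => h x (List.mem_cons_of_mem _ hx)
    have ih := cf_eq r m hr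
    have h1 : (0 : ℚ) < contAux (m :: r) := by exact_mod_cast contAux_pos _ hr
    have h3 : (0 : ℚ) < contAux (n :: m :: r) := by exact_mod_cast contAux_pos _ h
    rw [cf, ih]
    have h2 : (contAux (n :: m :: r) : ℚ) = n * contAux (m :: r) + contAux r := by
      simp [contAux]
    have : (n : ℚ) + contAux r / contAux (m :: r) = contAux (n :: m :: r) / contAux (m :: r) := by
      rw [h2]; field_simp
    rw [this, one_div_div]

lemma contAux_succ (n : ℕ) (t : List ℕ) :
    contAux ((n + 1) :: t) = contAux (n :: t) + contAux t := by
  cases t <;> simp [contAux]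
  ring

lemma prod_TF : ∀ (N : ℕ) (b : List ℕ), b ≠ [] → (∀ x ∈ b, 0 < x) → b.sum = N + 1 →
    ∏ i ∈ Finset.range N, (1 - cf (TF^[i] b)) = 1 / ((contAux b.tail : ℚ) * contAux b) := by
  intro N
  induction N with
  | zero =>
    intro b hb hp hs
    match b, hb with
    | n :: t, _ =>
      have hn := hp n (by simp)
      simp at hs
      have h1 : t = [] := by
        match t with
        | [] => rfl
        | m :: r =>
          have := hp m (by simp)
          simp at hs; omega
      subst h1
      simp at hs
      simp [contAux, hs]
  | succ N ih =>
    intro b hb hp hs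
    rw [Finset.prod_range_succ']
    simp only [Function.iterate_succ_apply, Function.iterate_zero_apply]
    match b, hb with
    | n :: t, _ =>
      have hpt : ∀ x ∈ t, 0 < x := fun x hx => hp x (List.mem_cons_of_mem _ hx)
      have hn := hp n (by simp)
      have ct : (0 : ℚ) < contAux t := by exact_mod_cast contAux_pos _ hpt
      have cb : (0 : ℚ) < contAux (n :: t) := by exact_mod_cast contAux_pos _ hp
      rw [cf_eq t n hp]
      match n, hn with
      | 1, _ =>
        match t with
        | [] => simp at hs
        | m :: r =>
          have hpr : ∀ x ∈ r, 0 < x := fun x hx => hpt x (List.mem_cons_of_mem _ hx)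
          have cr : (0 : ℚ) < contAux r := by exact_mod_cast contAux_pos _ hpr
          have := ih (m :: r) (by simp) hpt (by simp at hs ⊢; omega)
          simp only [TF]
          rw [this]
          have e : (contAux (1 :: m :: r) : ℚ) = contAux (m :: r) + contAux r := by
            simp [contAux]
          simp only [List.tail_cons]
          field_simp
          rw [e]; ring
      | k + 2, _ =>
        have hp' : ∀ x ∈ (k + 1) :: t, 0 < x := by
          intro x hx
          rcases List.mem_cons.1 hx with rfl | hx
          · omega
          · exact hpt x hx
        have cc : (0 : ℚ) < contAux ((k + 1) :: t) := by exact_mod_cast contAux_pos _ hp'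
        have := ih ((k + 1) :: t) (by simp) hp' (by simp at hs ⊢; omega)
        have e0 : TF ((k + 2) :: t) = (k + 1) :: t := by simp [TF]
        rw [e0, this]
        have e : (contAux ((k + 2) :: t) : ℚ) = contAux ((k + 1) :: t) + contAux t := by
          exact_mod_cast contAux_succ (k + 1) t
        simp only [List.tail_cons]
        field_simp
        rw [e]; ring

lemma TpF_iter (i : ℕ) (a : List ℕ) : (TpF^[i] a).reverse = TF^[i] a.reverse := by
  induction i generalizing a with
  | zero => rfl
  | succ i ih => simp [Function.iterate_succ_apply, ih, TpF]

/-- The product of the Lebesgue transition probabilities along the lineage of a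
node equals the length of its Farey interval: the product over `i < ‖a‖` of
`1 − [0; reversal of T_{φF}^[i] a]` equals
`1 / (⟨n₁, …, n_{k−1}⟩ * ⟨n₁, …, n_k⟩)`; in particular this product is the
reciprocal of a positive integer. -/
theorem lineage_product (a : List ℕ) (h : IsX a) :
    (∏ i ∈ Finset.range (a.sum - 1), (1 - cf ((TpF^[i] a).reverse))
        = 1 / ((cont a.dropLast : ℚ) * (cont a : ℚ))) ∧
    ∃ m : ℕ, 0 < m ∧
      (∏ i ∈ Finset.range (a.sum - 1), (1 - cf ((TpF^[i] a).reverse))) = 1 / (m : ℚ) := by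
  have key : ∏ i ∈ Finset.range (a.sum - 1), (1 - cf ((TpF^[i] a).reverse))
        = 1 / ((cont a.dropLast : ℚ) * (cont a : ℚ)) := by
    obtain ⟨hne, hp⟩ := h
    have hs : 0 < a.sum := by
      match a, hne with
      | n :: t, _ =>
        have := hp n (by simp)
        simp; omega
    have := prod_TF (a.sum - 1) a.reverse (by simpa using hne) (by simpa using hp)
      (by rw [List.sum_reverse]; omega)
    simp only [TpF_iter, this, cont, List.tail_reverse]
  refine ⟨key, cont a.dropLast * cont a, ?_, ?_⟩
  · exact Nat.mul_pos
      (contAux_pos _ fun x hx => h.2 x (List.mem_of_mem_dropLast (List.mem_reverse.1 hx)))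
      (contAux_pos _ fun x hx => h.2 x (List.mem_reverse.1 hx))
  · rw [key]; push_cast; rfl
end
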